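/- arXiv:2404.06959 — 3 statements merged into one kernel-verified Lean document; each statement's English description precedes it below -/
import Mathlib

section
/- Let P be a nonzero finite-dimensional unital C*-algebra, τ a faithful tracial state on P, and (λ_i) a right quasi-basis for τ. Then for every minimal central projection p of P one has (Σ_i λ_i λ_i*)·p = (dim_ℂ(pP)/τ(p))·p; equivalently, Σ_i λ_i λ_i* = Σ_{j=1}^k (n_j²/τ(p_j))·p_j, where p_1, …, p_k are the minimal central projections of P and n_j² = dim_ℂ(p_j P). -/
/-!
Put `T = ∑ i, u i * v i`, where `x = ∑ i, τ (x * u i) • v i` for all `x`. This expansion writes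
right multiplication by `a` as a sum of rank-one maps and gives `Tr (x ↦ x * a) = τ (a * T)`. Since
`Tr` and `τ` are both tracial and `τ` is nondegenerate, `T` is central. Central elements are normal,
so the centre is reduced; being commutative and finite-dimensional it is semisimple, so a minimal
central projection `p` generates a simple ideal of it, on which `T` acts by a scalar `c` by Schur's
lemma: `T * p = c • p`. Applying `τ` identifies `c * τ p` with the trace of the idempotent map
`x ↦ x * p`, whose rank is `dim (pP)`.
-/

/-- A minimal central projection of `P`. -/
def IsMinCentralProjection {P : Type*} [Ring P] [StarRing P] (p : P) : Prop :=
  p ≠ 0 ∧ p * p = p ∧ star p = p ∧ (∀ x : P, p * x = x * p) ∧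
  ∀ q : P, q * q = q → star q = q → (∀ x : P, q * x = x * q) → q * p = q → q = 0 ∨ q = p

section ProperInvolution

variable {A : Type*} [NonUnitalRing A] [StarRing A] (hstar : ∀ x : A, star x * x = 0 → x = 0)

include hstar

theorem eq_zero_of_isStarNormal_of_mul_self_eq_zero {x : A} [IsStarNormal x] (hx : x * x = 0) :
    x = 0 := by
  have hcomm : star x * x = x * star x := star_comm_self' x
  refine hstar x (hstar _ ?_)
  calc star (star x * x) * (star x * x) = star x * (x * star x) * x := by
        simp only [star_mul, star_star, mul_assoc]
    _ = star x * star x * (x * x) := by rw [← hcomm]; simp only [mul_assoc]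
    _ = 0 := by rw [hx, mul_zero]

theorem isSelfAdjoint_of_isIdempotentElem_of_isStarNormal {e : A} [IsStarNormal e]
    (he : IsIdempotentElem e) : IsSelfAdjoint e := by
  have hcomm : star e * e = e * star e := star_comm_self' e
  set d := e - star e * e with hd
  have hstard : star d = star e - star e * e := by
    rw [hd, star_sub, star_mul, star_star]
  have hed : e * d = d := by
    rw [hd, mul_sub, he.eq, ← mul_assoc, ← hcomm, mul_assoc, he.eq]
  have hd0 : d = 0 := hstar d <| by
    rw [hstard, sub_mul, mul_assoc, hed, sub_self]
  rw [sub_eq_zero.mp hd0]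
  exact .star_mul_self e

end ProperInvolution

/-- A primitive idempotent of a commutative semiring: a nonzero idempotent `e` that is minimal for
the order `f ≤ e ↔ f * e = f` on idempotents. -/
structure IsPrimitiveIdempotent {R : Type*} [CommSemiring R] (e : R) : Prop where
  ne_zero : e ≠ 0
  isIdempotentElem : IsIdempotentElem e
  eq_zero_or_eq_of_mul_eq : ∀ f : R, IsIdempotentElem f → f * e = f → f = 0 ∨ f = e

namespace IsPrimitiveIdempotent

variable {R : Type*} [CommRing R] {e : R}

theorem isSimpleModule_span_singleton [IsSemisimpleRing R] (he : IsPrimitiveIdempotent e) :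
    IsSimpleModule R (Ideal.span {e}) := by
  refine isSimpleModule_iff_isAtom.mpr ⟨by simpa using he.ne_zero, fun J hJ => ?_⟩
  obtain ⟨f, hf, rfl⟩ := IsSemisimpleRing.ideal_eq_span_idempotent J
  obtain ⟨r, hr⟩ := Ideal.span_singleton_le_span_singleton.mp hJ.le
  have hfe : f * e = f := by rw [hr, mul_right_comm, he.isIdempotentElem.eq]
  rcases he.eq_zero_or_eq_of_mul_eq f hf hfe with rfl | rfl
  · exact Ideal.span_singleton_eq_bot.mpr rfl
  · exact absurd hJ (lt_irrefl _)

theorem exists_mul_eq_smul (K : Type*) [Field K] [IsAlgClosed K] [Algebra K R]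
    [FiniteDimensional K R] [IsReduced R] (he : IsPrimitiveIdempotent e) (z : R) :
    ∃ c : K, z * e = c • e := by
  have : IsArtinianRing R := .of_finite K R
  have : IsSemisimpleRing R := IsArtinianRing.isSemisimpleRing_of_isReduced R
  have : IsSimpleModule R (Ideal.span {e}) := he.isSimpleModule_span_singleton
  obtain ⟨c, hc⟩ := (IsSimpleModule.algebraMap_end_bijective_of_isAlgClosed
    (A := R) (V := Ideal.span {e}) K).surjective (LinearMap.lsmul R _ z)
  refine ⟨c, ?_⟩
  have hce := LinearMap.congr_fun hc ⟨e, Ideal.mem_span_singleton_self e⟩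
  exact congrArg Subtype.val hce.symm

end IsPrimitiveIdempotent

section Center

theorem isStarNormal_of_mem_center (K : Type*) {A : Type*} [CommSemiring K] [Semiring A] [Star A]
    [Algebra K A] {z : A} (hz : z ∈ Subalgebra.center K A) : IsStarNormal z :=
  ⟨Subalgebra.mem_center_iff.mp hz (star z)⟩

variable (K : Type*) {P : Type*} [Ring P] [StarRing P]

theorem isReduced_center [CommSemiring K] [Algebra K P] (hstar : ∀ x : P, star x * x = 0 → x = 0) :
    IsReduced (Subalgebra.center K P) := by
  refine (isReduced_iff_pow_one_lt 2 one_lt_two).mpr fun z hz => Subtype.ext ?_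
  have := isStarNormal_of_mem_center K z.2
  refine eq_zero_of_isStarNormal_of_mul_self_eq_zero hstar ?_
  simpa [sq] using congrArg Subtype.val hz

namespace IsMinCentralProjection

variable {p : P}

theorem ne_zero (hp : IsMinCentralProjection p) : p ≠ 0 :=
  hp.1

theorem isIdempotentElem (hp : IsMinCentralProjection p) : IsIdempotentElem p :=
  hp.2.1

protected theorem mul_comm (hp : IsMinCentralProjection p) (x : P) : p * x = x * p :=
  hp.2.2.2.1 x

theorem eq_zero_or_eq_of_mul_eq (hp : IsMinCentralProjection p) {q : P} (hq : IsStarProjection q)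
    (hcomm : ∀ x : P, q * x = x * q) (hqp : q * p = q) : q = 0 ∨ q = p :=
  hp.2.2.2.2 q hq.isIdempotentElem hq.isSelfAdjoint hcomm hqp

theorem mem_center [CommSemiring K] [Algebra K P] (hp : IsMinCentralProjection p) :
    p ∈ Subalgebra.center K P :=
  Subalgebra.mem_center_iff.mpr fun x => (hp.mul_comm x).symm

theorem isPrimitiveIdempotent_center [CommSemiring K] [Algebra K P]
    (hstar : ∀ x : P, star x * x = 0 → x = 0) (hp : IsMinCentralProjection p) :
    IsPrimitiveIdempotent (⟨p, hp.mem_center K⟩ : Subalgebra.center K P) where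
  ne_zero h := hp.ne_zero (congrArg Subtype.val h)
  isIdempotentElem := Subtype.ext hp.isIdempotentElem
  eq_zero_or_eq_of_mul_eq f hf hfp := by
    have hidem : IsIdempotentElem (f : P) := congrArg Subtype.val hf
    have := isStarNormal_of_mem_center K f.2
    have hself := isSelfAdjoint_of_isIdempotentElem_of_isStarNormal hstar hidem
    have hcomm (x : P) : (f : P) * x = x * f := (Subalgebra.mem_center_iff.mp f.2 x).symm
    exact (hp.eq_zero_or_eq_of_mul_eq ⟨hidem, hself⟩ hcomm (congrArg Subtype.val hfp)).imp
      Subtype.ext Subtype.ext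

theorem exists_mul_eq_smul [Field K] [IsAlgClosed K] [Algebra K P] [FiniteDimensional K P]
    (hstar : ∀ x : P, star x * x = 0 → x = 0) (hp : IsMinCentralProjection p) {z : P}
    (hz : z ∈ Subalgebra.center K P) : ∃ c : K, z * p = c • p := by
  have := isReduced_center K hstar
  obtain ⟨c, hc⟩ := (hp.isPrimitiveIdempotent_center K hstar).exists_mul_eq_smul K ⟨z, hz⟩
  exact ⟨c, congrArg Subtype.val hc⟩

end IsMinCentralProjection

end Center

/-- The families `u` and `v` form a right quasi-basis for the functional `τ`, in the two-family form
of Watatani. A family `l` is a right quasi-basis in the one-family sense when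
`IsRightQuasiBasis τ l (fun i => star (l i))` holds. -/
def IsRightQuasiBasis {R P ι : Type*} [CommSemiring R] [Semiring P] [Algebra R P] [Fintype ι]
    (τ : P →ₗ[R] R) (u v : ι → P) : Prop :=
  ∀ x : P, x = ∑ i, τ (x * u i) • v i

namespace IsRightQuasiBasis

section Semiring

variable {R P ι : Type*} [CommSemiring R] [Semiring P] [Algebra R P] [Fintype ι]
  {τ : P →ₗ[R] R} {u v : ι → P}

theorem eq_of_forall_apply_mul_eq (h : IsRightQuasiBasis τ u v) {x y : P}
    (hxy : ∀ a : P, τ (x * a) = τ (y * a)) : x = y := by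
  rw [h x, h y]
  simp only [hxy]

theorem module_finite (h : IsRightQuasiBasis τ u v) : Module.Finite R P :=
  .of_surjective (Fintype.linearCombination R v) fun x => ⟨fun i => τ (x * u i), (h x).symm⟩

end Semiring

variable {R P ι : Type*} [CommRing R] [Ring P] [Algebra R P] [Module.Free R P] [Fintype ι]
  {τ : P →ₗ[R] R} {u v : ι → P}

theorem trace_mulRight (h : IsRightQuasiBasis τ u v) (hτ : ∀ x y : P, τ (x * y) = τ (y * x))
    (a : P) : LinearMap.trace R P (LinearMap.mulRight R a) = τ (a * ∑ i, u i * v i) := by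
  have := h.module_finite
  have hrankOne : LinearMap.mulRight R a =
      ∑ i, (τ ∘ₗ LinearMap.mulRight R (a * u i)).smulRight (v i) := by
    ext x
    simpa [mul_assoc] using h (x * a)
  calc LinearMap.trace R P (LinearMap.mulRight R a) = ∑ i, τ (v i * (a * u i)) := by
        simp only [hrankOne, map_sum, LinearMap.trace_smulRight, LinearMap.comp_apply,
          LinearMap.mulRight_apply]
    _ = ∑ i, τ (a * (u i * v i)) :=
        Finset.sum_congr rfl fun i _ => by rw [hτ, mul_assoc]
    _ = τ (a * ∑ i, u i * v i) := by rw [Finset.mul_sum, map_sum]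

theorem sum_mul_mem_center (h : IsRightQuasiBasis τ u v)
    (hτ : ∀ x y : P, τ (x * y) = τ (y * x)) :
    ∑ i, u i * v i ∈ Subalgebra.center R P := by
  set T := ∑ i, u i * v i
  refine Subalgebra.mem_center_iff.mpr fun b => h.eq_of_forall_apply_mul_eq fun a => ?_
  calc τ (b * T * a) = τ (a * b * T) := by rw [hτ, mul_assoc]
    _ = τ (b * a * T) := by
        rw [← h.trace_mulRight hτ, ← h.trace_mulRight hτ, LinearMap.mulRight_mul,
          LinearMap.mulRight_mul]
        exact LinearMap.trace_mul_comm R _ _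
    _ = τ (T * b * a) := by rw [hτ, mul_assoc]

end IsRightQuasiBasis

theorem trace_mulRight_eq_finrank_range {K A : Type*} [Field K] [Ring A] [Algebra K A]
    [FiniteDimensional K A] {e : A} (he : IsIdempotentElem e) :
    LinearMap.trace K A (LinearMap.mulRight K e) =
      Module.finrank K (LinearMap.range (LinearMap.mulRight K e)) := by
  have hidem : IsIdempotentElem (LinearMap.mulRight K e) := by
    rw [IsIdempotentElem, ← sq, LinearMap.pow_mulRight, sq, he.eq]
  exact (LinearMap.IsIdempotentElem.isProj_range _ hidem).trace

theorem index_of_tracial_state_general {K P ι : Type*} [Field K] [IsAlgClosed K] [CharZero K]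
    [Ring P] [StarRing P] [Algebra K P] [Fintype ι] (hstar : ∀ x : P, star x * x = 0 → x = 0)
    {τ : P →ₗ[K] K} (hτ : ∀ x y : P, τ (x * y) = τ (y * x)) {u v : ι → P}
    (h : IsRightQuasiBasis τ u v) {p : P} (hp : IsMinCentralProjection p) :
    (∑ i, u i * v i) * p =
      ((Module.finrank K (LinearMap.range (LinearMap.mulLeft K p)) : K) / τ p) • p := by
  have := h.module_finite
  have hLR : LinearMap.mulLeft K p = LinearMap.mulRight K p := LinearMap.ext hp.mul_comm
  obtain ⟨c, hc⟩ := hp.exists_mul_eq_smul K hstar (h.sum_mul_mem_center hτ)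
  have hdim : (Module.finrank K (LinearMap.range (LinearMap.mulLeft K p)) : K) = c * τ p := by
    rw [hLR, ← trace_mulRight_eq_finrank_range hp.isIdempotentElem, h.trace_mulRight hτ,
      hτ, hc, map_smul, smul_eq_mul]
  have hdim_ne : (Module.finrank K (LinearMap.range (LinearMap.mulLeft K p)) : K) ≠ 0 := by
    rw [Nat.cast_ne_zero, ne_eq, Submodule.finrank_eq_zero, LinearMap.range_eq_bot]
    exact fun h0 => hp.ne_zero (by simpa using LinearMap.congr_fun h0 1)
  have hτp : τ p ≠ 0 := right_ne_zero_of_mul (hdim ▸ hdim_ne)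
  rw [hc, hdim, mul_div_cancel_right₀ c hτp]

/-- for any right quasi-basis `(λ_i)` of a faithful tracial state `τ` on a
nonzero finite-dimensional unital C*-algebra `P`, and any minimal central projection `p`
of `P`, one has `(Σ_i λ_i λ_i*)·p = (dim_ℂ(pP)/τ(p))·p`. -/
theorem index_of_tracial_state
    (P : Type*) [NormedRing P] [StarRing P] [CStarRing P]
    [NormedAlgebra ℂ P] [StarModule ℂ P] [Nontrivial P] [FiniteDimensional ℂ P]
    (τ : P →ₗ[ℂ] ℂ) (hτ1 : τ 1 = 1)
    (hτpos : ∀ x : P, ∃ r : ℝ, 0 ≤ r ∧ τ (star x * x) = (r : ℂ))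
    (hτfaithful : ∀ x : P, τ (star x * x) = 0 → x = 0)
    (hτtracial : ∀ x y : P, τ (x * y) = τ (y * x))
    (n : ℕ) (l : Fin n → P)
    (hqb : ∀ x : P, x = ∑ i, τ (x * l i) • star (l i)) :
    ∀ p : P, IsMinCentralProjection p →
      (∑ i, l i * star (l i)) * p =
        (((Module.finrank ℂ ↥(LinearMap.range (LinearMap.mulLeft ℂ p)) : ℕ) : ℂ) / τ p) • p :=
  fun _ hp => index_of_tracial_state_general
    (fun x => (CStarRing.star_mul_self_eq_zero_iff x).mp) hτtracial hqb hp
end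

section
/- Let B ⊆ A be an inclusion of simple unital C*-algebras with common unit admitting a finite-index conditional expectation, let E₀ : A → B be the minimal conditional expectation, and let C := C*(B ∪ C_A(B)). Then E₀|_C : C → B admits a two-sided orthonormal quasi-basis contained in C_A(B): there exists a finite family (μ_j) in C_A(B) with E₀(μ_i* μ_j) = δ_{ij}·1 for all i, j, and w = Σ_j E₀(w μ_j) μ_j* = Σ_j E₀(w μ_j*) μ_j for every w ∈ C. -/
/-!
Write `F` for the relative commutant of `B`. As `B` has trivial centre, `E₀` is scalar-valued on
`F`. For a quasi-basis `l`, the map `τ y = ∑ lᵢ y lᵢ*` sends `F` into the centre of `A`, and `τ 1`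
is the Watatani index `r₀`.

Let `a ∈ F` be invertible. The positive central element `τ (a⁻¹ (a⁻¹)*)`, when invertible, corrects
the weight `a` so that, for a suitable multiple `h` of `a √(τ (a⁻¹ (a⁻¹)*))`, the expectation
`x ↦ E₀ (h* x h)` has scalar index `E₀ (a* a τ (a⁻¹ (a⁻¹)*))`. For `a = exp (t y / 2)` with `y ∈ F`
self-adjoint, minimality says that this has a local minimum at `t = 0`, and the vanishing of its
derivative is `E₀ (τ y) = r₀ E₀ y`.

That identity makes `E₀` tracial on `F`: the modular twist `θ` of `E₀` satisfies
`E₀ (x θ(c)) = E₀ (c x)` and `τ (θ(c) d) = τ (d c)`, hence also `E₀ (θ(c) d) = E₀ (d c)`, and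
`p = c - θ(c)` then has `E₀ (p* p) = -E₀ (p p*)`, so `p = 0`.

By traciality, Parseval's identity for `l` and Bessel's inequality bound the size of an orthonormal
family in `F` by `r₀`. A maximal one expands every element of `F`, traciality turns this expansion
into a two-sided one, and both sides extend to the closed span of `B F`.
-/

namespace RegularInclusion

variable {A : Type*} [NormedRing A] [StarRing A] [CStarRing A] [CompleteSpace A]
  [NormedAlgebra ℂ A] [StarModule ℂ A]

/-- A conditional expectation of `A` onto the subset `B`: a `ℂ`-linear positive
`B`-bimodular projection of `A` onto `B`. -/
def IsCondExp (B : Set A) (E : A →ₗ[ℂ] A) : Prop :=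
  (∀ x, E x ∈ B) ∧ (∀ b ∈ B, E b = b) ∧
  (∀ x, ∃ y, E (star x * x) = star y * y) ∧
  (∀ b₁ ∈ B, ∀ b₂ ∈ B, ∀ x, E (b₁ * x * b₂) = b₁ * E x * b₂)

/-- `l` is a right quasi-basis for `E`, witnessing finite index. -/
def IsRightQB (E : A →ₗ[ℂ] A) {n : ℕ} (l : Fin n → A) : Prop :=
  ∀ x, x = ∑ i, E (x * l i) * star (l i)

/-- The centralizer (relative commutant) `C_A(B)` of `B` in `A`. -/
def cent (B : Set A) : Set A := {x | ∀ b ∈ B, x * b = b * x}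

/-- The normalizer `N_A(B) = {u ∈ U(A) : uBu* = B}` of `B` in `A`. -/
def normalizer (B : Set A) : Set A :=
  {u | u ∈ unitary A ∧ (fun x => u * x * star u) '' B = B}

/-- The set `U(B)` of unitaries of `B`. -/
def UB (B : Set A) : Set A := {b | b ∈ B ∧ b ∈ unitary A}

/-- The set `U(B)·U(C_A(B))` of products of a unitary of `B` and a unitary of
the centralizer of `B`. -/
def UBC (B : Set A) : Set A :=
  {x | ∃ b c, b ∈ B ∧ b ∈ unitary A ∧ c ∈ cent B ∧ c ∈ unitary A ∧ x = b * c}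

/-- Simplicity of the C*-algebra (given as the subset `S` of `A`): the only closed
two-sided ideals of `S` are `{0}` and `S`. -/
def IsSimpleCStar (S : Set A) : Prop :=
  ∀ I : Set A, I ⊆ S → IsClosed I → (0 : A) ∈ I →
    (∀ x ∈ I, ∀ y ∈ I, x + y ∈ I) →
    (∀ x ∈ I, ∀ b ∈ S, x * b ∈ I ∧ b * x ∈ I) →
    I = {0} ∨ I = S

/-- The intermediate C*-subalgebra `C := C*(B ∪ C_A(B))` generated by `B` and the
centralizer of `B`. -/
def genC (B : Set A) : StarSubalgebra ℂ A :=
  (StarAlgebra.adjoin ℂ (B ∪ cent B)).topologicalClosure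

/-- Regularity of the inclusion `B ⊆ A`: the normalizer of `B` generates `A` as a
C*-algebra. -/
def IsRegular (B : Set A) : Prop :=
  (StarAlgebra.adjoin ℂ (normalizer B)).topologicalClosure = ⊤

/-- `E₀` is the minimal conditional expectation of `A` onto `B`: the finite-index
conditional expectation whose (scalar) Watatani index is least among all finite-index
conditional expectations onto `B`. -/
def IsMinimalCondExp (B : Set A) (E₀ : A →ₗ[ℂ] A) : Prop :=
  IsCondExp B E₀ ∧
  ∃ (r₀ : ℝ) (n : ℕ) (l : Fin n → A), IsRightQB E₀ l ∧
    (∑ i, l i * star (l i)) = (r₀ : ℂ) • 1 ∧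
    ∀ E : A →ₗ[ℂ] A, IsCondExp B E → ∀ (m : ℕ) (μ : Fin m → A), IsRightQB E μ →
      ∀ r : ℝ, (∑ i, μ i * star (μ i)) = (r : ℂ) • 1 → r₀ ≤ r

section CStarAlgebra

attribute [local instance] CStarAlgebra.spectralOrder CStarAlgebra.spectralOrderedRing

variable {D : Type*} [CStarAlgebra D] {B : StarSubalgebra ℂ D}

/-! ### Simple subalgebras and their relative commutants -/

/-- The relative commutant of `B`, that is `cent B` bundled as a star subalgebra. -/
abbrev relCommutant (B : StarSubalgebra ℂ D) : StarSubalgebra ℂ D :=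
  StarSubalgebra.centralizer ℂ (B : Set D)

lemma mem_relCommutant {c : D} : c ∈ relCommutant B ↔ ∀ b ∈ B, c * b = b * c := by
  rw [StarSubalgebra.mem_centralizer_iff]
  exact ⟨fun h b hb => (h b hb).1.symm, fun h b hb => ⟨(h b hb).symm, (h _ (star_mem hb)).symm⟩⟩

lemma coe_relCommutant : (relCommutant B : Set D) = cent (B : Set D) :=
  Set.ext fun _ => mem_relCommutant

lemma eq_zero_or_isUnit_of_isSimpleCStar (hB : IsClosed (B : Set D))
    (hsimple : IsSimpleCStar (B : Set D)) {y : D} (hyB : y ∈ B) (hy : y ∈ relCommutant B) :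
    y = 0 ∨ IsUnit y := by
  rw [mem_relCommutant] at hy
  have hideal := hsimple (closure ((y * ·) '' (B : Set D)))
    (closure_minimal (Set.image_subset_iff.2 fun s hs => mul_mem hyB hs) hB) isClosed_closure
    (subset_closure ⟨0, zero_mem B, mul_zero y⟩)
    (fun x hx w hw => map_mem_closure₂ continuous_add hx hw <| by
      rintro _ ⟨s, hs, rfl⟩ _ ⟨t, ht, rfl⟩
      exact ⟨s + t, add_mem hs ht, mul_add y s t⟩)
    (fun x hx b hb =>
      ⟨map_mem_closure (f := (· * b)) (by fun_prop) hx <| by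
        rintro _ ⟨s, hs, rfl⟩
        exact ⟨s * b, mul_mem hs hb, (mul_assoc y s b).symm⟩,
      map_mem_closure (f := (b * ·)) (by fun_prop) hx <| by
        rintro _ ⟨s, hs, rfl⟩
        exact ⟨b * s, mul_mem hb hs, by simp only [← mul_assoc, hy b hb]⟩⟩)
  refine hideal.imp (fun h => ?_) (fun h => ?_)
  · exact h.subset (subset_closure ⟨1, one_mem B, mul_one y⟩)
  · obtain ⟨_, hunit, s, hs, rfl⟩ := mem_closure_iff.1 (h.symm.subset (one_mem B)) _
      Units.isOpen isUnit_one
    exact ((Commute.isUnit_mul_iff (hy s hs)).1 hunit).1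

lemma isCentral_of_isSimpleCStar (hB : IsClosed (B : Set D))
    (hsimple : IsSimpleCStar (B : Set D)) : Algebra.IsCentral ℂ B := by
  refine ⟨fun z hz => ?_⟩
  rcases subsingleton_or_nontrivial D with _ | _
  · exact Algebra.mem_bot.2 ⟨0, Subsingleton.elim _ _⟩
  obtain ⟨k, hk⟩ := spectrum.nonempty (z : D)
  have hz_comm : (z : D) ∈ relCommutant B := mem_relCommutant.2 fun b hb =>
    congrArg Subtype.val (Subalgebra.mem_center_iff.1 hz ⟨b, hb⟩).symm
  have hzero := (eq_zero_or_isUnit_of_isSimpleCStar hB hsimple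
    (sub_mem (B.algebraMap_mem k) z.2) (sub_mem (algebraMap_mem _ k) hz_comm)).resolve_right hk
  exact Algebra.mem_bot.2 ⟨k, Subtype.ext (sub_eq_zero.1 hzero)⟩

/-! ### Conditional expectations -/

variable {E : D →ₗ[ℂ] D} {n : ℕ} {l : Fin n → D}

namespace IsCondExp

lemma map_mem (hE : IsCondExp (B : Set D) E) (x : D) : E x ∈ B := hE.1 x

lemma map_of_mem (hE : IsCondExp (B : Set D) E) {b : D} (hb : b ∈ B) : E b = b := hE.2.1 b hb

lemma map_one (hE : IsCondExp (B : Set D) E) : E 1 = 1 := hE.map_of_mem (one_mem B)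

lemma map_mul_left (hE : IsCondExp (B : Set D) E) {b : D} (hb : b ∈ B) (x : D) :
    E (b * x) = b * E x := by
  simpa using hE.2.2.2 b hb 1 (one_mem B) x

lemma map_mul_right (hE : IsCondExp (B : Set D) E) {b : D} (hb : b ∈ B) (x : D) :
    E (x * b) = E x * b := by
  simpa using hE.2.2.2 1 (one_mem B) b hb x

lemma map_nonneg [PartialOrder D] [StarOrderedRing D] (hE : IsCondExp (B : Set D) E) {x : D}
    (hx : 0 ≤ x) : 0 ≤ E x := by
  obtain ⟨y, rfl⟩ := CStarAlgebra.nonneg_iff_eq_star_mul_self.1 hx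
  obtain ⟨z, hz⟩ := hE.2.2.1 y
  exact hz ▸ star_mul_self_nonneg z

lemma map_star (hE : IsCondExp (B : Set D) E) (x : D) : E (star x) = star (E x) :=
  StarHomClass.map_star (PositiveLinearMap.mk₀ E fun _ => hE.map_nonneg) x

lemma continuous (hE : IsCondExp (B : Set D) E) : Continuous E :=
  map_continuous (PositiveLinearMap.mk₀ E fun _ => hE.map_nonneg)

lemma exists_map_eq_smul_one [Algebra.IsCentral ℂ B] (hE : IsCondExp (B : Set D) E) {c : D}
    (hc : c ∈ relCommutant B) : ∃ k : ℂ, E c = k • 1 := by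
  have hcenter : (⟨E c, hE.map_mem c⟩ : B) ∈ Subalgebra.center ℂ B :=
    Subalgebra.mem_center_iff.2 fun b => Subtype.ext <| by
      simp [← hE.map_mul_left b.2, ← hE.map_mul_right b.2, mem_relCommutant.1 hc b b.2]
  obtain ⟨k, hk⟩ := (Algebra.IsCentral.mem_center_iff ℂ).1 hcenter
  exact ⟨k, by simpa [Algebra.algebraMap_eq_smul_one] using congrArg Subtype.val hk⟩

/-- The state induced by `E` on the relative commutant is extended to all of `D` so that no subtypes
are needed. -/
lemma exists_functional [Nontrivial D] [Algebra.IsCentral ℂ B] (hE : IsCondExp (B : Set D) E) :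
    ∃ φ : D →L[ℂ] ℂ, φ 1 = 1 ∧ ∀ c ∈ relCommutant B, E c = φ c • 1 := by
  obtain ⟨ψ, -, hψ⟩ := exists_dual_vector' ℂ (1 : D)
  have hψ_one : ψ 1 = 1 := by simpa using hψ
  refine ⟨ψ.comp ⟨E, hE.continuous⟩, by simpa [hE.map_one] using hψ_one, fun c hc => ?_⟩
  obtain ⟨k, hk⟩ := hE.exists_map_eq_smul_one hc
  simp [hk, hψ_one]

lemma eq_sum_mul_map (hE : IsCondExp (B : Set D) E) (hl : IsRightQB E l) (x : D) :
    x = ∑ i, l i * E (star (l i) * x) := by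
  have hexp := congrArg star (hl (star x))
  simpa only [star_star, star_sum, star_mul, ← hE.map_star] using hexp

lemma sum_map_mul_map (hE : IsCondExp (B : Set D) E) (hl : IsRightQB E l) (x y : D) :
    ∑ i, E (x * l i) * E (star (l i) * y) = E (x * y) := by
  simp_rw [← hE.map_mul_left (hE.map_mem _), ← map_sum, ← mul_assoc, ← Finset.sum_mul, ← hl x]

lemma eq_of_map_mul_left_eq (hE : IsCondExp (B : Set D) E) (hl : IsRightQB E l) {x y : D}
    (h : ∀ z, E (z * x) = E (z * y)) : x = y := by
  rw [hE.eq_sum_mul_map hl x, hE.eq_sum_mul_map hl y]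
  simp_rw [h]

end IsCondExp

/-! ### The index map and the modular twist -/

/-- The map `y ↦ ∑ lᵢ y lᵢ*`. For a quasi-basis `l` its value at `1` is the Watatani index, and on
the relative commutant it is the dual expectation up to scaling. -/
noncomputable def indexMap (l : Fin n → D) : D →ₗ[ℂ] D :=
  ∑ i, LinearMap.mulLeftRight ℂ (l i, star (l i))

lemma indexMap_apply (l : Fin n → D) (y : D) : indexMap l y = ∑ i, l i * y * star (l i) := by
  simp [indexMap]

lemma indexMap_one (l : Fin n → D) : indexMap l 1 = ∑ i, l i * star (l i) := by
  simp [indexMap_apply]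

lemma isSelfAdjoint_indexMap {y : D} (hy : IsSelfAdjoint y) : IsSelfAdjoint (indexMap l y) := by
  rw [indexMap_apply]
  exact isSelfAdjoint_sum _ fun i _ => hy.conjugate (l i)

lemma continuous_indexMap (l : Fin n → D) : Continuous (indexMap l) := by
  rw [show indexMap l = fun y => ∑ i, l i * y * star (l i) from funext (indexMap_apply l)]
  fun_prop

lemma indexMap_conjugate_of_commute {z : D} (hz : ∀ x, Commute z x) (y : D) :
    indexMap l (z * y * z) = z * indexMap l y * z := by
  simp only [indexMap_apply, Finset.mul_sum, Finset.sum_mul]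
  refine Finset.sum_congr rfl fun i _ => ?_
  rw [mul_assoc z, ← mul_assoc (l i), ← (hz (l i)).eq]
  simp only [mul_assoc, (hz (star (l i))).eq]

lemma sum_sum_map_mul_mul_star (hE : IsCondExp (B : Set D) E) (hl : IsRightQB E l) {y : D}
    (hy : y ∈ relCommutant B) (z : Fin n → D) :
    ∑ i, (∑ j, l j * E (z j * l i)) * y * star (l i) = ∑ j, l j * y * z j := by
  have hswap (i j : Fin n) : l j * E (z j * l i) * y * star (l i) =
      l j * y * (E (z j * l i) * star (l i)) := by
    rw [mul_assoc (l j), ← mem_relCommutant.1 hy _ (hE.map_mem _)]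
    simp only [mul_assoc]
  simp_rw [Finset.sum_mul, hswap]
  rw [Finset.sum_comm]
  simp_rw [← Finset.mul_sum, ← hl _]

lemma commute_indexMap (hE : IsCondExp (B : Set D) E) (hl : IsRightQB E l) {y : D}
    (hy : y ∈ relCommutant B) (x : D) : Commute x (indexMap l y) := by
  have hsum := sum_sum_map_mul_mul_star hE hl hy fun j => star (l j) * x
  simp_rw [mul_assoc (star _) x, ← hE.eq_sum_mul_map hl] at hsum
  simpa only [Commute, SemiconjBy, indexMap_apply, Finset.mul_sum, Finset.sum_mul, mul_assoc]
    using hsum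

lemma indexMap_mem_relCommutant (hE : IsCondExp (B : Set D) E) (hl : IsRightQB E l) {y : D}
    (hy : y ∈ relCommutant B) : indexMap l y ∈ relCommutant B :=
  mem_relCommutant.2 fun b _ => (commute_indexMap hE hl hy b).symm

/-- The map `c ↦ ∑ lᵢ E (c lᵢ*)`. For a quasi-basis `l` it is the modular automorphism of `E` on the
relative commutant: `E (x * twist E l c) = E (c * x)`. -/
noncomputable def twist (E : D →ₗ[ℂ] D) (l : Fin n → D) (c : D) : D :=
  ∑ i, l i * E (c * star (l i))

lemma map_mul_twist (hE : IsCondExp (B : Set D) E) (hl : IsRightQB E l) {c : D}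
    (hc : c ∈ relCommutant B) (x : D) : E (x * twist E l c) = E (c * x) := by
  have hterm (i : Fin n) : E (x * (l i * E (c * star (l i)))) =
      E (c * (E (x * l i) * star (l i))) := by
    rw [← mul_assoc x, hE.map_mul_right (hE.map_mem _), ← mul_assoc c,
      mem_relCommutant.1 hc _ (hE.map_mem _), mul_assoc, hE.map_mul_left (hE.map_mem _)]
  simp_rw [twist, Finset.mul_sum, map_sum, hterm, ← map_sum, ← Finset.mul_sum, ← hl x]

lemma twist_mem_relCommutant (hE : IsCondExp (B : Set D) E) (hl : IsRightQB E l) {c : D}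
    (hc : c ∈ relCommutant B) : twist E l c ∈ relCommutant B :=
  mem_relCommutant.2 fun b hb => hE.eq_of_map_mul_left_eq hl fun z => by
    rw [← mul_assoc, ← mul_assoc, hE.map_mul_right hb, map_mul_twist hE hl hc,
      map_mul_twist hE hl hc, ← mul_assoc, hE.map_mul_right hb]

lemma indexMap_twist_mul (hE : IsCondExp (B : Set D) E) (hl : IsRightQB E l) {c d : D}
    (hc : c ∈ relCommutant B) (hd : d ∈ relCommutant B) :
    indexMap l (twist E l c * d) = indexMap l (d * c) := by
  have htwist (i : Fin n) : l i * twist E l c = ∑ j, l j * E (c * star (l j) * l i) := by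
    rw [hE.eq_sum_mul_map hl (l i * twist E l c)]
    simp_rw [← mul_assoc (star _) (l i), map_mul_twist hE hl hc, ← mul_assoc]
  simp_rw [indexMap_apply, ← mul_assoc, htwist,
    sum_sum_map_mul_mul_star hE hl hd fun j => c * star (l j), ← mul_assoc]

/-! ### Perturbing a conditional expectation -/

lemma inv_mem_relCommutant {h : Dˣ} (hh : ↑h ∈ relCommutant B) : ↑h⁻¹ ∈ relCommutant B :=
  mem_relCommutant.2 fun b hb => Commute.units_inv_left (mem_relCommutant.1 hh b hb)

lemma isCondExp_comp_mulLeftRight (hE : IsCondExp (B : Set D) E) {h : D} (hh : h ∈ relCommutant B)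
    (hnorm : E (star h * h) = 1) :
    IsCondExp (B : Set D) (E ∘ₗ LinearMap.mulLeftRight ℂ (star h, h)) := by
  have hleft := mem_relCommutant.1 (star_mem hh)
  have hright := mem_relCommutant.1 hh
  refine ⟨fun x => hE.map_mem _, fun b hb => ?_, fun x => ?_, fun b₁ hb₁ b₂ hb₂ x => ?_⟩
  · simp [hleft b hb, mul_assoc b, hE.map_mul_left hb, hnorm]
  · simpa [mul_assoc] using hE.2.2.1 (x * h)
  · have hassoc : star h * (b₁ * x * b₂) * h = b₁ * (star h * x * h) * b₂ := by
      rw [mul_assoc b₁, ← mul_assoc (star h), hleft b₁ hb₁]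
      simp only [mul_assoc, hright b₂ hb₂]
    simp [hassoc, hE.map_mul_left hb₁, hE.map_mul_right hb₂]

lemma isRightQB_comp_mulLeftRight (hE : IsCondExp (B : Set D) E) (hl : IsRightQB E l) {h : Dˣ}
    (hh : ↑h ∈ relCommutant B) :
    IsRightQB (E ∘ₗ LinearMap.mulLeftRight ℂ (star ↑h, ↑h)) fun i => l i * (↑h⁻¹ : D) := by
  intro x
  have hterm (i : Fin n) : E (star ↑h * (x * (l i * ↑h⁻¹)) * ↑h) * star (l i * (↑h⁻¹ : D)) =
      star ↑h⁻¹ * (E (star ↑h * x * l i) * star (l i)) := by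
    rw [star_mul, ← mul_assoc, ← mul_assoc (star (↑h⁻¹ : D)), ← mem_relCommutant.1
      (star_mem (inv_mem_relCommutant hh)) _ (hE.map_mem _)]
    simp [mul_assoc]
  simp only [LinearMap.comp_apply, LinearMap.mulLeftRight_apply, hterm]
  rw [← Finset.mul_sum, ← hl, ← mul_assoc, ← star_mul]
  simp

/-! ### Positivity and faithfulness -/

open scoped ComplexOrder

namespace IsCondExp

/-- For `e = E (y* x)` and `t > 0`, expanding `0 ≤ E ((x - t y e)* (x - t y e))` gives
`2 e* e ≤ t E ((y e)* (y e))`. -/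
lemma map_star_mul_eq_zero (hE : IsCondExp (B : Set D) E) {x : D} (hx : E (star x * x) = 0)
    (y : D) : E (star y * x) = 0 := by
  set e := E (star y * x)
  set z := y * e
  have hzx : E (star z * x) = star e * e := by
    rw [star_mul, mul_assoc, hE.map_mul_left (star_mem (hE.map_mem _))]
  have hxz : E (star x * z) = star e * e := by
    rw [← star_star z, ← star_mul, hE.map_star, hzx]
    simp
  have hle (t : ℝ) (ht : 0 < t) : (2 : ℝ) • (star e * e) ≤ t • E (star z * z) := by
    have hexpand : E (star (x - t • z) * (x - t • z)) =
        t • (t • E (star z * z) - (2 : ℝ) • (star e * e)) := by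
      simp only [star_sub, star_smul, star_trivial, sub_mul, mul_sub, smul_mul_assoc,
        mul_smul_comm, map_sub, LinearMap.map_smul_of_tower, hx, hzx, hxz]
      module
    have hnonneg := hE.map_nonneg (star_mul_self_nonneg (x - t • z))
    rw [hexpand] at hnonneg
    simpa [smul_smul, ht.ne'] using smul_nonneg (inv_nonneg.2 ht.le) hnonneg
  have hcont : Continuous fun t : ℝ => t • E (star z * z) := by fun_prop
  have hlim := (hcont.tendsto' 0 0 (zero_smul ℝ _)).mono_left
    (nhdsWithin_le_nhds (s := Set.Ioi 0))
  have hnonpos : (2 : ℝ) • (star e * e) ≤ 0 :=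
    ge_of_tendsto hlim (eventually_mem_nhdsWithin.mono hle)
  have hzero := hnonpos.antisymm (smul_nonneg two_pos.le (star_mul_self_nonneg e))
  simpa using hzero

lemma eq_zero_of_map_star_mul_self_eq_zero (hE : IsCondExp (B : Set D) E) (hl : IsRightQB E l)
    {x : D} (hx : E (star x * x) = 0) : x = 0 := by
  rw [hE.eq_sum_mul_map hl x]
  simp [hE.map_star_mul_eq_zero hx]

lemma exists_pos_map_star_mul_self_eq_smul_one [Nontrivial D] [Algebra.IsCentral ℂ B]
    (hE : IsCondExp (B : Set D) E) (hl : IsRightQB E l) {c : D} (hc : c ∈ relCommutant B)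
    (hc_ne : c ≠ 0) : ∃ k : ℝ, 0 < k ∧ E (star c * c) = (k : ℂ) • 1 := by
  obtain ⟨k, hk⟩ := hE.exists_map_eq_smul_one (mul_mem (star_mem hc) hc)
  have hk_mem : k ∈ spectrum ℂ (E (star c * c)) := by
    simp [hk, ← Algebra.algebraMap_eq_smul_one]
  have hk_nonneg : 0 ≤ k :=
    spectrum_nonneg_of_nonneg (hE.map_nonneg (star_mul_self_nonneg c)) hk_mem
  have hk_ne : k ≠ 0 := fun h =>
    hc_ne (hE.eq_zero_of_map_star_mul_self_eq_zero hl (by simp [hk, h]))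
  obtain ⟨r, hr, rfl⟩ := RCLike.pos_iff_exists_ofReal.1 (hk_nonneg.lt_of_ne hk_ne.symm)
  exact ⟨r, hr, hk⟩

lemma exists_smul_map_star_mul_self_eq_one [Nontrivial D] [Algebra.IsCentral ℂ B]
    (hE : IsCondExp (B : Set D) E) (hl : IsRightQB E l) {c : D} (hc : c ∈ relCommutant B)
    (hc_ne : c ≠ 0) : ∃ r : ℝ, r ≠ 0 ∧ E (star (r • c) * (r • c)) = 1 := by
  obtain ⟨k, hk, hck⟩ := hE.exists_pos_map_star_mul_self_eq_smul_one hl hc hc_ne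
  refine ⟨(√k)⁻¹, by positivity, ?_⟩
  rw [star_smul, smul_mul_smul_comm, LinearMap.map_smul_of_tower, hck, Complex.coe_smul, smul_smul,
    star_trivial, ← mul_inv, Real.mul_self_sqrt hk.le, inv_mul_cancel₀ hk.ne', one_smul]

end IsCondExp

/-! ### Perturbations of scalar index -/

lemma exists_isCondExp_of_indexMap_eq_one [Nontrivial D] [Algebra.IsCentral ℂ B]
    (hE : IsCondExp (B : Set D) E) (hl : IsRightQB E l) (h : Dˣ) (hh : ↑h ∈ relCommutant B)
    (hindex : indexMap l (↑h⁻¹ * star ↑h⁻¹) = 1) :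
    ∃ (E' : D →ₗ[ℂ] D) (m : Fin n → D), IsCondExp (B : Set D) E' ∧ IsRightQB E' m ∧
      ∑ i, m i * star (m i) = E (star ↑h * ↑h) := by
  obtain ⟨r, hr, hnorm⟩ := hE.exists_smul_map_star_mul_self_eq_one hl hh h.ne_zero
  set g : Dˣ := Units.mk0 r hr • h
  have hg : ↑g ∈ relCommutant B := (relCommutant B).smul_mem hh (r : ℂ)
  refine ⟨_, _, isCondExp_comp_mulLeftRight hE hg hnorm, isRightQB_comp_mulLeftRight hE hl hg,
    ?_⟩
  have hscale : E (star ↑h * ↑h) = (r * r)⁻¹ • (1 : D) := by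
    rw [← hnorm, star_smul, smul_mul_smul_comm, LinearMap.map_smul_of_tower, smul_smul,
      star_trivial r, inv_mul_cancel₀ (mul_ne_zero hr hr), one_smul]
  have hinv : (↑g⁻¹ : D) = r⁻¹ • ↑h⁻¹ := congrArg Units.val (Units.smul_inv (Units.mk0 r hr) h)
  calc ∑ i, l i * ↑g⁻¹ * star (l i * ↑g⁻¹)
      = indexMap l (↑g⁻¹ * star ↑g⁻¹) := by simp [indexMap_apply, mul_assoc]
    _ = (r * r)⁻¹ • indexMap l (↑h⁻¹ * star ↑h⁻¹) := by
      rw [hinv, star_smul, smul_mul_smul_comm, LinearMap.map_smul_of_tower, star_trivial, mul_inv]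
    _ = E (star ↑h * ↑h) := by rw [hindex, hscale]

lemma indexMap_nonneg [PartialOrder D] [StarOrderedRing D] {y : D} (hy : 0 ≤ y) :
    0 ≤ indexMap l y := by
  rw [indexMap_apply]
  exact Finset.sum_nonneg fun i _ => star_right_conjugate_nonneg hy (l i)

/-- The perturbing element is `a * √u`, where `u = indexMap l (a⁻¹ (a⁻¹)*)`: as `u` is positive and
central, this weight turns the index of the perturbation into a scalar. -/
lemma exists_isCondExp_of_isUnit_indexMap [Nontrivial D] [Algebra.IsCentral ℂ B]
    (hE : IsCondExp (B : Set D) E) (hl : IsRightQB E l) (a : Dˣ) (ha : ↑a ∈ relCommutant B)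
    (hunit : IsUnit (indexMap l (↑a⁻¹ * star ↑a⁻¹))) :
    ∃ (E' : D →ₗ[ℂ] D) (m : Fin n → D), IsCondExp (B : Set D) E' ∧ IsRightQB E' m ∧
      ∑ i, m i * star (m i) = E (star ↑a * ↑a * indexMap l (↑a⁻¹ * star ↑a⁻¹)) := by
  have ha_inv := inv_mem_relCommutant ha
  set u := indexMap l (↑a⁻¹ * star ↑a⁻¹) with hu
  have hu_nonneg : 0 ≤ u := indexMap_nonneg (mul_star_self_nonneg _)
  obtain ⟨s, hs⟩ := (CFC.isUnit_sqrt_iff u).2 hunit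
  have hs_sq : (s : D) * s = u := by rw [hs, CFC.sqrt_mul_sqrt_self u]
  have hs_star : star s = s := Units.ext <| by
    rw [Units.coe_star, hs, (CFC.sqrt_nonneg u).isSelfAdjoint.star_eq]
  have hs_comm (x : D) : Commute (s : D) x := by
    rw [hs]
    exact (commute_indexMap hE hl (mul_mem ha_inv (star_mem ha_inv)) x).symm.cfcₙ_nnreal _
  have hindex : indexMap l (↑(a * s)⁻¹ * star ↑(a * s)⁻¹) = 1 := by
    have hassoc : (↑(a * s)⁻¹ * star ↑(a * s)⁻¹ : D) = ↑s⁻¹ * (↑a⁻¹ * star ↑a⁻¹) * ↑s⁻¹ := by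
      simp [← Units.coe_star_inv, hs_star, mul_assoc]
    rw [hassoc, indexMap_conjugate_of_commute fun x => (hs_comm x).units_inv_left, ← hu, ← hs_sq]
    simp
  have hmem : ↑(a * s) ∈ relCommutant B :=
    mul_mem ha (mem_relCommutant.2 fun b _ => (hs_comm b).eq)
  convert exists_isCondExp_of_indexMap_eq_one hE hl (a * s) hmem hindex using 7
  rw [Units.val_mul, star_mul, ← Units.coe_star s, hs_star, (hs_comm _).eq, ← hs_sq]
  simp only [mul_assoc, (hs_comm _).eq]

/-! ### The variational argument -/

open NormedSpace Filter Topology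

lemma exists_units_exp (y : D) : ∃ a : Dˣ, (a : D) = exp y ∧ (↑a⁻¹ : D) = exp (-y) := by
  let _ := NormedAlgebra.restrictScalars ℚ ℂ D
  let _ := invertibleExp y
  exact ⟨unitOfInvertible (exp y), rfl, invOf_exp y⟩

lemma exp_add_self (y : D) : exp (y + y) = exp y * exp y := by
  let _ := NormedAlgebra.restrictScalars ℚ ℂ D
  exact exp_add_of_commute (Commute.refl y)

lemma continuous_exp : Continuous (exp : D → D) := by
  let _ := NormedAlgebra.restrictScalars ℚ ℂ D
  exact exp_continuous

lemma exp_mem_relCommutant {y : D} (hy : y ∈ relCommutant B) : exp y ∈ relCommutant B :=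
  mem_relCommutant.2 fun b hb => Commute.exp_left (mem_relCommutant.1 hy b hb)

lemma hasDerivAt_re_map_exp_mul_indexMap_exp (φ : D →L[ℂ] ℂ) (l : Fin n → D) (y : D) :
    HasDerivAt (fun t : ℝ => (φ (exp (t • y) * indexMap l (exp (-(t • y))))).re)
      (φ (y * indexMap l 1 - indexMap l y)).re 0 := by
  let L : D →L[ℝ] D := ContinuousLinearMap.restrictScalars ℝ ⟨indexMap l, continuous_indexMap l⟩
  have hexp := hasDerivAt_exp_smul_const (𝕂 := ℝ) y 0
  have hindex := L.hasFDerivAt.comp_hasDerivAt 0 (hasDerivAt_exp_smul_const (𝕂 := ℝ) (-y) 0)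
  have hcomp := (Complex.reCLM.comp (φ.restrictScalars ℝ)).hasFDerivAt.comp_hasDerivAt 0
    (hexp.mul hindex)
  simpa [L, Function.comp_def, sub_eq_add_neg] using hcomp

lemma ofReal_re_eq_of_isSelfAdjoint_smul_one [Nontrivial D] {k : ℂ}
    (h : IsSelfAdjoint (k • (1 : D))) : (k.re : ℂ) = k := by
  rw [isSelfAdjoint_iff, star_smul, star_one] at h
  exact Complex.conj_eq_iff_re.1 (smul_left_injective ℂ one_ne_zero h)

/-- `r` is a lower bound for the scalar Watatani indices of the finite-index conditional
expectations onto `B`. -/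
def IsIndexLowerBound (B : Set D) (r : ℝ) : Prop :=
  ∀ E : D →ₗ[ℂ] D, IsCondExp B E → ∀ (m : ℕ) (μ : Fin m → D), IsRightQB E μ →
    ∀ s : ℝ, (∑ i, μ i * star (μ i)) = (s : ℂ) • 1 → r ≤ s

namespace IsIndexLowerBound

variable [Nontrivial D] [Algebra.IsCentral ℂ B] {r : ℝ}

lemma le_re_map_exp_mul_indexMap_exp (hr : IsIndexLowerBound (B : Set D) r)
    (hE : IsCondExp (B : Set D) E) (hl : IsRightQB E l) {φ : D →L[ℂ] ℂ}
    (hφ : ∀ c ∈ relCommutant B, E c = φ c • 1) {y : D} (hy : y ∈ relCommutant B)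
    (hy_sa : IsSelfAdjoint y) (hunit : IsUnit (indexMap l (exp (-y)))) :
    r ≤ (φ (exp y * indexMap l (exp (-y)))).re := by
  set z : D := (2⁻¹ : ℝ) • y
  have hzz : z + z = y := by rw [← add_smul, ← two_mul, mul_inv_cancel₀ two_ne_zero, one_smul]
  have hz : z ∈ relCommutant B := (relCommutant B).smul_mem hy ((2⁻¹ : ℝ) : ℂ)
  have hz_sa : IsSelfAdjoint z := .smul (.all _) hy_sa
  obtain ⟨a, ha, ha_inv⟩ := exists_units_exp z
  have ha_sq : star ↑a * ↑a = exp y := by rw [ha, hz_sa.exp.star_eq, ← exp_add_self, hzz]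
  have ha_inv_sq : ↑a⁻¹ * star ↑a⁻¹ = exp (-y) := by
    rw [ha_inv, hz_sa.neg.exp.star_eq, ← exp_add_self, ← neg_add, hzz]
  obtain ⟨E', m, hE', hm, hindex⟩ := exists_isCondExp_of_isUnit_indexMap hE hl a
    (ha ▸ exp_mem_relCommutant hz) (ha_inv_sq ▸ hunit)
  rw [ha_sq, ha_inv_sq, hφ _ (mul_mem (exp_mem_relCommutant hy)
    (indexMap_mem_relCommutant hE hl (exp_mem_relCommutant (neg_mem hy))))] at hindex
  refine hr E' hE' n m hm _ ?_
  rw [ofReal_re_eq_of_isSelfAdjoint_smul_one (D := D), hindex]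
  exact hindex ▸ isSelfAdjoint_sum _ fun i _ => .mul_star_self (m i)

lemma isLocalMin_re_map_exp_mul_indexMap_exp (hr : IsIndexLowerBound (B : Set D) r)
    (hr_ne : r ≠ 0) (hE : IsCondExp (B : Set D) E) (hl : IsRightQB E l)
    (hindex : indexMap l 1 = r • 1) {φ : D →L[ℂ] ℂ} (hφ_one : φ 1 = 1)
    (hφ : ∀ c ∈ relCommutant B, E c = φ c • 1) {y : D} (hy : y ∈ relCommutant B)
    (hy_sa : IsSelfAdjoint y) :
    IsLocalMin (fun t : ℝ => (φ (exp (t • y) * indexMap l (exp (-(t • y))))).re) 0 := by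
  have hcont : Continuous fun t : ℝ => indexMap l (exp (-(t • y))) :=
    (continuous_indexMap l).comp (continuous_exp.comp (by fun_prop))
  have hunit : ∀ᶠ t : ℝ in 𝓝 0, IsUnit (indexMap l (exp (-(t • y)))) :=
    hcont.continuousAt.eventually_mem (Units.isOpen.mem_nhds (by
      simpa [hindex] using (Units.mk0 r hr_ne • (1 : Dˣ)).isUnit))
  filter_upwards [hunit] with t ht
  have hzero : (φ (exp ((0 : ℝ) • y) * indexMap l (exp (-((0 : ℝ) • y))))).re = r := by
    simp [hindex, hφ_one, ← Complex.coe_smul]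
  exact hzero.trans_le <| hr.le_re_map_exp_mul_indexMap_exp hE hl hφ
    ((relCommutant B).smul_mem hy (t : ℂ)) (.smul (.all t) hy_sa) ht

lemma map_indexMap_of_isSelfAdjoint (hr : IsIndexLowerBound (B : Set D) r) (hr_ne : r ≠ 0)
    (hE : IsCondExp (B : Set D) E) (hl : IsRightQB E l) (hindex : indexMap l 1 = r • 1) {y : D}
    (hy : y ∈ relCommutant B) (hy_sa : IsSelfAdjoint y) : E (indexMap l y) = r • E y := by
  obtain ⟨φ, hφ_one, hφ⟩ := hE.exists_functional
  have hderiv := (hr.isLocalMin_re_map_exp_mul_indexMap_exp hr_ne hE hl hindex hφ_one hφ hy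
    hy_sa).hasDerivAt_eq_zero (hasDerivAt_re_map_exp_mul_indexMap_exp φ l y)
  set c := y * indexMap l 1 - indexMap l y with hc
  have hc_smul : c = r • y - indexMap l y := by rw [hc, hindex, mul_smul_comm, mul_one]
  have hc_sa : IsSelfAdjoint c :=
    hc_smul ▸ .sub (.smul (.all r) hy_sa) (isSelfAdjoint_indexMap hy_sa)
  have hEc := hφ c (sub_mem (mul_mem hy (indexMap_mem_relCommutant hE hl (one_mem _)))
    (indexMap_mem_relCommutant hE hl hy))
  have hφc : φ c = 0 := by
    have hφc_sa : IsSelfAdjoint (φ c • (1 : D)) := by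
      rw [← hEc, isSelfAdjoint_iff, ← hE.map_star, hc_sa.star_eq]
    rw [← ofReal_re_eq_of_isSelfAdjoint_smul_one hφc_sa, hderiv, Complex.ofReal_zero]
  rw [hφc, zero_smul, hc_smul, map_sub, LinearMap.map_smul_of_tower, sub_eq_zero] at hEc
  exact hEc.symm

lemma map_indexMap (hr : IsIndexLowerBound (B : Set D) r) (hr_ne : r ≠ 0)
    (hE : IsCondExp (B : Set D) E) (hl : IsRightQB E l) (hindex : indexMap l 1 = r • 1) {c : D}
    (hc : c ∈ relCommutant B) : E (indexMap l c) = r • E c := by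
  let ι : relCommutant B →ₗ[ℂ] D := (relCommutant B).toSubalgebra.toSubmodule.subtype
  have hext : E ∘ₗ indexMap l ∘ₗ ι = (r • E) ∘ₗ ι :=
    LinearMap.ext_on span_selfAdjoint fun y hy =>
      hr.map_indexMap_of_isSelfAdjoint hr_ne hE hl hindex y.2 (congrArg Subtype.val hy)
  exact LinearMap.congr_fun hext ⟨c, hc⟩

end IsIndexLowerBound

/-! ### Traciality -/

lemma map_twist_mul_of_map_indexMap (hE : IsCondExp (B : Set D) E) (hl : IsRightQB E l) {r : ℝ}
    (hr_ne : r ≠ 0) (hindex : ∀ c ∈ relCommutant B, E (indexMap l c) = r • E c) {c d : D}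
    (hc : c ∈ relCommutant B) (hd : d ∈ relCommutant B) : E (twist E l c * d) = E (d * c) := by
  refine smul_right_injective D hr_ne ?_
  beta_reduce
  rw [← hindex _ (mul_mem (twist_mem_relCommutant hE hl hc) hd), ← hindex _ (mul_mem hd hc),
    indexMap_twist_mul hE hl hc hd]

/-- With `p = c - twist E l c`, both relations for the twist give `E (p* p) = - E (p p*)`, so that
`p = 0` by faithfulness. -/
lemma map_mul_comm_of_map_indexMap (hE : IsCondExp (B : Set D) E) (hl : IsRightQB E l) {r : ℝ}
    (hr_ne : r ≠ 0) (hindex : ∀ c ∈ relCommutant B, E (indexMap l c) = r • E c) {c : D}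
    (hc : c ∈ relCommutant B) (x : D) : E (x * c) = E (c * x) := by
  set p := c - twist E l c with hp
  have hp_mem : p ∈ relCommutant B := sub_mem hc (twist_mem_relCommutant hE hl hc)
  have hanti : E (star p * p) = -E (p * star p) := by
    nth_rw 2 [hp]
    nth_rw 3 [hp]
    rw [mul_sub, sub_mul, map_sub, map_sub, map_mul_twist hE hl hc,
      map_twist_mul_of_map_indexMap hE hl hr_ne hindex hc (star_mem hp_mem), neg_sub]
  have hp_zero : E (star p * p) = 0 := le_antisymm
    (hanti ▸ neg_nonpos.2 (hE.map_nonneg (mul_star_self_nonneg p)))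
    (hE.map_nonneg (star_mul_self_nonneg p))
  have htwist : c = twist E l c :=
    sub_eq_zero.1 (hE.eq_zero_of_map_star_mul_self_eq_zero hl hp_zero)
  conv_lhs => rw [htwist, map_mul_twist hE hl hc]

lemma indexMap_one_ne_zero [Nontrivial D] (hl : IsRightQB E l) : indexMap l 1 ≠ 0 := by
  intro hzero
  rw [indexMap_one, Finset.sum_eq_zero_iff_of_nonneg fun i _ => mul_star_self_nonneg (l i)] at hzero
  have hl_zero (i : Fin n) : l i = 0 :=
    CStarRing.mul_star_self_eq_zero_iff _ |>.1 (hzero i (Finset.mem_univ i))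
  exact (one_ne_zero : (1 : D) ≠ 0) (by simpa [hl_zero] using hl 1)

/-! ### Orthonormal families -/

/-- A finite family orthonormal for the `B`-valued inner product `⟨x, y⟩ = E (x* y)`. -/
def IsOrthonormal (E : D →ₗ[ℂ] D) {k : ℕ} (μ : Fin k → D) : Prop :=
  ∀ i j, E (star (μ i) * μ j) = if i = j then 1 else 0

variable {k : ℕ} {μ : Fin k → D}

lemma IsOrthonormal.cons (hE : IsCondExp (B : Set D) E) (hμ : IsOrthonormal E μ) {c : D}
    (hc : E (star c * c) = 1) (horth : ∀ j, E (star (μ j) * c) = 0) :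
    IsOrthonormal E (Fin.cons c μ : Fin (k + 1) → D) := by
  have horth' (j : Fin k) : E (star c * μ j) = 0 := by
    rw [← star_star (μ j), ← star_mul, hE.map_star, horth, star_zero]
  intro i j
  induction i using Fin.cases <;> induction j using Fin.cases <;>
    simp [hc, horth, horth', hμ _ _, Fin.succ_ne_zero, (Fin.succ_ne_zero _).symm]

lemma IsOrthonormal.map_star_mul_sum (hE : IsCondExp (B : Set D) E) (hμ : IsOrthonormal E μ)
    (x : D) (i : Fin k) : E (star (μ i) * ∑ j, μ j * E (star (μ j) * x)) = E (star (μ i) * x) := by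
  simp [Finset.mul_sum, ← mul_assoc, hE.map_mul_right (hE.map_mem _), hμ i _]

lemma IsOrthonormal.sum_star_mul_le (hE : IsCondExp (B : Set D) E) (hμ : IsOrthonormal E μ)
    (x : D) :
    ∑ j, star (E (star (μ j) * x)) * E (star (μ j) * x) ≤ E (star x * x) := by
  set p := ∑ j, μ j * E (star (μ j) * x) with hp
  have hstar_p_mul (z : D) : E (star p * z) =
      ∑ j, star (E (star (μ j) * x)) * E (star (μ j) * z) := by
    simp [hp, Finset.sum_mul, mul_assoc, hE.map_mul_left (star_mem (hE.map_mem _))]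
  have hp_orth : E (star p * p) = E (star p * x) := by
    simp_rw [hstar_p_mul, hp, hμ.map_star_mul_sum hE]
  have hxp : E (star x * p) = E (star p * x) := by
    rw [← star_star p, ← star_mul, hE.map_star, star_star, ← hp_orth, ← hE.map_star]
    simp
  have hnonneg := hE.map_nonneg (star_mul_self_nonneg (x - p))
  simp only [star_sub, mul_sub, sub_mul, map_sub, hp_orth, hxp, sub_self, sub_zero] at hnonneg
  rw [← hstar_p_mul]
  exact sub_nonneg.1 hnonneg

lemma IsOrthonormal.card_le [Nontrivial D] (hE : IsCondExp (B : Set D) E) (hl : IsRightQB E l)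
    {r : ℝ} (hindex : indexMap l 1 = r • 1)
    (htrace : ∀ c ∈ relCommutant B, ∀ x, E (x * c) = E (c * x))
    (hμ : IsOrthonormal E μ) (hμ_mem : ∀ j, μ j ∈ relCommutant B) : (k : ℝ) ≤ r := by
  have hparseval (j : Fin k) :
      ∑ i, star (E (star (μ j) * star (l i))) * E (star (μ j) * star (l i)) = 1 := by
    have hterm (i : Fin n) : star (E (star (μ j) * star (l i))) * E (star (μ j) * star (l i)) =
        E (μ j * l i) * E (star (l i) * star (μ j)) := by
      rw [← hE.map_star, star_mul, star_star, star_star, htrace _ (hμ_mem j),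
        htrace _ (star_mem (hμ_mem j))]
    simp_rw [hterm, hE.sum_map_mul_map hl, ← htrace _ (hμ_mem j), hμ j j, if_pos]
  have hle : (k : ℝ) • (1 : D) ≤ r • 1 := calc
    (k : ℝ) • (1 : D)
      = ∑ i, ∑ j, star (E (star (μ j) * star (l i))) * E (star (μ j) * star (l i)) := by
        rw [Finset.sum_comm]
        simp [hparseval, Nat.cast_smul_eq_nsmul]
    _ ≤ ∑ i, E (star (star (l i)) * star (l i)) :=
        Finset.sum_le_sum fun i _ => hμ.sum_star_mul_le hE (star (l i))
    _ = r • 1 := by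
        simp_rw [star_star]
        rw [← map_sum, ← indexMap_one, hindex, LinearMap.map_smul_of_tower, hE.map_one]
  have hgap : 0 ≤ algebraMap ℝ D (r - k) := by
    rwa [Algebra.algebraMap_eq_smul_one, sub_smul, sub_nonneg]
  have hspec : r - k ∈ spectrum ℝ (algebraMap ℝ D (r - k)) := by
    rw [spectrum.scalar_eq, Set.mem_singleton_iff]
  exact sub_nonneg.1 (spectrum_nonneg_of_nonneg hgap hspec)

lemma exists_maximal_isOrthonormal [Nontrivial D] [Algebra.IsCentral ℂ B]
    (hE : IsCondExp (B : Set D) E) (hl : IsRightQB E l) {r : ℝ} (hindex : indexMap l 1 = r • 1)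
    (htrace : ∀ c ∈ relCommutant B, ∀ x, E (x * c) = E (c * x)) :
    ∃ (k : ℕ) (μ : Fin k → D), (∀ j, μ j ∈ relCommutant B) ∧ IsOrthonormal E μ ∧
      ∀ c ∈ relCommutant B, (∀ j, E (star (μ j) * c) = 0) → c = 0 := by
  by_contra! hextend
  have hexists (k : ℕ) : ∃ μ : Fin k → D, (∀ j, μ j ∈ relCommutant B) ∧ IsOrthonormal E μ := by
    induction k with
    | zero => exact ⟨Fin.elim0, fun j => j.elim0, fun j => j.elim0⟩
    | succ k ih =>
      obtain ⟨μ, hμ_mem, hμ⟩ := ih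
      obtain ⟨c, hc, horth, hc_ne⟩ := hextend k μ hμ_mem hμ
      obtain ⟨s, -, hnorm⟩ := hE.exists_smul_map_star_mul_self_eq_one hl hc hc_ne
      exact ⟨Fin.cons (s • c) μ, Fin.cases ((relCommutant B).smul_mem hc (s : ℂ)) hμ_mem,
        hμ.cons hE hnorm fun j => by simp [horth j]⟩
  obtain ⟨k, hk⟩ := exists_nat_gt r
  obtain ⟨μ, hμ_mem, hμ⟩ := hexists k
  exact hk.not_ge (hμ.card_le hE hl hindex htrace hμ_mem)

lemma IsOrthonormal.eq_sum_of_maximal [Algebra.IsCentral ℂ B] (hE : IsCondExp (B : Set D) E)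
    (hμ : IsOrthonormal E μ) (hμ_mem : ∀ j, μ j ∈ relCommutant B)
    (hmax : ∀ c ∈ relCommutant B, (∀ j, E (star (μ j) * c) = 0) → c = 0) {c : D}
    (hc : c ∈ relCommutant B) : c = ∑ j, μ j * E (star (μ j) * c) := by
  have hsum_mem : ∑ j, μ j * E (star (μ j) * c) ∈ relCommutant B := sum_mem fun j _ => by
    obtain ⟨s, hs⟩ := hE.exists_map_eq_smul_one (mul_mem (star_mem (hμ_mem j)) hc)
    rw [hs, mul_smul_comm, mul_one]
    exact (relCommutant B).smul_mem (hμ_mem j) s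
  refine sub_eq_zero.1 (hmax _ (sub_mem hc hsum_mem) fun i => ?_)
  rw [mul_sub, map_sub, hμ.map_star_mul_sum hE, sub_self]

/-! ### Expansions on the algebra generated by `B` and its relative commutant -/

lemma genC_subset_of_isClosed {V : Submodule ℂ D} (hV : IsClosed (V : Set D))
    (hmul : ∀ b ∈ B, ∀ c ∈ relCommutant B, b * c ∈ V) : (genC (B : Set D) : Set D) ⊆ V := by
  refine closure_minimal (fun w hw => ?_) hV
  have hspan : w ∈ Submodule.span ℂ (Submonoid.closure
      (((B : Set D) ∪ cent (B : Set D)) ∪ star ((B : Set D) ∪ cent (B : Set D))) : Set D) := by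
    rw [← Algebra.adjoin_eq_span]
    exact hw
  refine Submodule.span_le.2 (fun m hm => ?_) hspan
  obtain ⟨b, hb, c, hc, rfl⟩ : ∃ b ∈ B, ∃ c ∈ relCommutant B, m = b * c := by
    induction hm using Submonoid.closure_induction_left with
    | one => exact ⟨1, one_mem B, 1, one_mem _, (one_mul 1).symm⟩
    | mul_left s hs m _ ih =>
      obtain ⟨b, hb, c, hc, rfl⟩ := ih
      have hs' : s ∈ B ∨ s ∈ relCommutant B := by
        rw [← coe_relCommutant] at hs
        rcases hs with (hs | hs) | (hs | hs)
        exacts [.inl hs, .inr hs, .inl (star_mem_iff.1 hs), .inr (star_mem_iff.1 hs)]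
      rcases hs' with hs | hs
      · exact ⟨s * b, mul_mem hs hb, c, hc, (mul_assoc s b c).symm⟩
      · exact ⟨b, hb, s * c, mul_mem hs hc, by
          rw [← mul_assoc, mem_relCommutant.1 hs b hb, mul_assoc]⟩
  exact hmul b hb c hc

lemma eq_sum_of_mem_genC (hE : IsCondExp (B : Set D) E) {a d : Fin k → D}
    (h : ∀ c ∈ relCommutant B, c = ∑ j, E (c * a j) * d j) :
    ∀ w ∈ genC (B : Set D), w = ∑ j, E (w * a j) * d j := by
  have hcont := hE.continuous
  let S : D →ₗ[ℂ] D :=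
    ∑ j, LinearMap.mulRight ℂ (d j) ∘ₗ E ∘ₗ LinearMap.mulRight ℂ (a j)
  have hS (w : D) : S w = ∑ j, E (w * a j) * d j := by simp [S]
  have hclosed : IsClosed (LinearMap.eqLocus LinearMap.id S : Set D) :=
    isClosed_eq continuous_id (by rw [funext hS]; fun_prop)
  intro w hw
  refine (genC_subset_of_isClosed hclosed (fun b hb c hc => ?_) hw).trans (hS w)
  change b * c = S (b * c)
  conv_lhs => rw [h c hc, Finset.mul_sum]
  simp [hS, mul_assoc, hE.map_mul_left hb]

lemma IsOrthonormal.eq_sum_map_mul_star [Algebra.IsCentral ℂ B] (hE : IsCondExp (B : Set D) E)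
    (hμ : IsOrthonormal E μ) (hμ_mem : ∀ j, μ j ∈ relCommutant B)
    (hmax : ∀ c ∈ relCommutant B, (∀ j, E (star (μ j) * c) = 0) → c = 0) :
    ∀ w ∈ genC (B : Set D), w = ∑ j, E (w * μ j) * star (μ j) := by
  refine eq_sum_of_mem_genC hE fun c hc => ?_
  have hexp := congrArg star (hμ.eq_sum_of_maximal hE hμ_mem hmax (star_mem hc))
  simpa only [star_star, star_sum, star_mul, ← hE.map_star] using hexp

lemma IsOrthonormal.eq_sum_map_star_mul [Algebra.IsCentral ℂ B] (hE : IsCondExp (B : Set D) E)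
    (htrace : ∀ c ∈ relCommutant B, ∀ x, E (x * c) = E (c * x))
    (hμ : IsOrthonormal E μ) (hμ_mem : ∀ j, μ j ∈ relCommutant B)
    (hmax : ∀ c ∈ relCommutant B, (∀ j, E (star (μ j) * c) = 0) → c = 0) :
    ∀ w ∈ genC (B : Set D), w = ∑ j, E (w * star (μ j)) * μ j := by
  refine eq_sum_of_mem_genC hE fun c hc => ?_
  simpa only [htrace c hc, mem_relCommutant.1 (hμ_mem _) _ (hE.map_mem _)] using
    hμ.eq_sum_of_maximal hE hμ_mem hmax hc

theorem restriction_of_minimal_CE_has_two_sided_ON_quasi_basis_general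
    (B : StarSubalgebra ℂ D) [Algebra.IsCentral ℂ B]
    (E₀ : D →ₗ[ℂ] D) (hE₀ : IsMinimalCondExp (B : Set D) E₀) :
    ∃ (n : ℕ) (μ : Fin n → D),
      (∀ j, μ j ∈ cent (B : Set D)) ∧
      (∀ i j, E₀ (star (μ i) * μ j) = if i = j then (1 : D) else 0) ∧
      (∀ w ∈ genC (B : Set D), w = ∑ j, E₀ (w * μ j) * star (μ j)) ∧
      (∀ w ∈ genC (B : Set D), w = ∑ j, E₀ (w * star (μ j)) * μ j) := by
  rcases subsingleton_or_nontrivial D with _ | _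
  · exact ⟨0, Fin.elim0, fun j => j.elim0, fun j => j.elim0,
      fun _ _ => Subsingleton.elim _ _, fun _ _ => Subsingleton.elim _ _⟩
  obtain ⟨hE, r, n, l, hl, hr, hmin : IsIndexLowerBound (B : Set D) r⟩ := hE₀
  have hindex : indexMap l 1 = r • (1 : D) := by rw [indexMap_one, hr, Complex.coe_smul]
  have hr_ne : r ≠ 0 := by
    rintro rfl
    exact indexMap_one_ne_zero hl (by rw [hindex, zero_smul])
  have htrace (c : D) (hc : c ∈ relCommutant B) (x : D) : E₀ (x * c) = E₀ (c * x) :=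
    map_mul_comm_of_map_indexMap hE hl hr_ne
      (fun _ => hmin.map_indexMap hr_ne hE hl hindex) hc x
  obtain ⟨k, μ, hμ_mem, hμ, hmax⟩ := exists_maximal_isOrthonormal hE hl hindex htrace
  exact ⟨k, μ, fun j => mem_relCommutant.1 (hμ_mem j), hμ,
    hμ.eq_sum_map_mul_star hE hμ_mem hmax, hμ.eq_sum_map_star_mul hE htrace hμ_mem hmax⟩

end CStarAlgebra

/-- for an inclusion `B ⊆ A` of simple unital C*-algebras with a
finite-index conditional expectation and minimal conditional expectation `E₀`, the
restriction of `E₀` to `C := C*(B ∪ C_A(B))` admits a two-sided orthonormal quasi-basis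
contained in the centralizer `C_A(B)`. -/
theorem restriction_of_minimal_CE_has_two_sided_ON_quasi_basis
    (B : StarSubalgebra ℂ A) (hBclosed : IsClosed (B : Set A))
    (hAsimple : IsSimpleCStar (Set.univ : Set A))
    (hBsimple : IsSimpleCStar (B : Set A))
    (E : A →ₗ[ℂ] A) (hE : IsCondExp (B : Set A) E)
    (nE : ℕ) (lE : Fin nE → A) (hlE : IsRightQB E lE)
    (E₀ : A →ₗ[ℂ] A) (hE₀ : IsMinimalCondExp (B : Set A) E₀) :
    ∃ (n : ℕ) (μ : Fin n → A),
      (∀ j, μ j ∈ cent (B : Set A)) ∧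
      (∀ i j, E₀ (star (μ i) * μ j) = if i = j then (1 : A) else 0) ∧
      (∀ w ∈ genC (B : Set A), w = ∑ j, E₀ (w * μ j) * star (μ j)) ∧
      (∀ w ∈ genC (B : Set A), w = ∑ j, E₀ (w * star (μ j)) * μ j) := by
  let _ : CStarAlgebra A := {}
  have := isCentral_of_isSimpleCStar hBclosed hBsimple
  exact restriction_of_minimal_CE_has_two_sided_ON_quasi_basis_general B E₀ hE₀

end RegularInclusion
end

section
/- Let B ⊆ A be an inclusion of unital C*-algebras with common unit such that the center of B equals ℂ·1, and let w ∈ N_A(B) with w ∉ U(B)·U(C_A(B)). Then Ad(w)|_B is a free automorphism of B, and E(w) = 0 for every conditional expectation E : A → B. Consequently, if u, v ∈ N_A(B) and v u* ∉ U(B)·U(C_A(B)), then E(v u*) = 0 = E(v* u). -/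
/-!
If `a ∈ B` intertwines the identity with `Ad(w)` on `B`, then `star w * a` commutes with `B`, so
`star a * a` and `a * star a` lie in the center of `B` and are scalars. If `a ≠ 0`, the C*-identity
makes both of them equal to `‖a‖ ^ 2`; hence `b = ‖a‖⁻¹ • a` is a unitary of `B` and
`w = b * (star b * w)` lies in `U(B)·U(C_A(B))`. By bimodularity `E w` is such an intertwiner.
Finally, `v * star u = v * star (star v * u) * star v`, and `U(B)·U(C_A(B))` is stable under
adjoints and under conjugation by the normalizer.
-/

namespace RegularInclusion

variable {A : Type*} [NormedRing A] [StarRing A] [CStarRing A] [CompleteSpace A]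
  [NormedAlgebra ℂ A] [StarModule ℂ A]

section Centralizer

variable {R : Type*} [NormedRing R]

lemma cent_eq_centralizer (S : Set R) : cent S = S.centralizer :=
  Set.ext fun _ => forall₂_congr fun _ _ => eq_comm

lemma mul_mem_cent {S : Set R} {x y : R} (hx : x ∈ cent S) (hy : y ∈ cent S) :
    x * y ∈ cent S := by
  rw [cent_eq_centralizer] at *
  exact Set.mul_mem_centralizer hx hy

lemma star_mem_cent {σ : Type*} [StarRing R] [SetLike σ R] [StarMemClass σ R] {B : σ} {x : R}
    (hx : x ∈ cent (B : Set R)) : star x ∈ cent (B : Set R) := by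
  rw [cent_eq_centralizer] at *
  exact Set.star_mem_centralizer' (fun _ hb => star_mem hb) hx

end Centralizer

section Normalizer

variable {R : Type*} [NormedRing R] [StarRing R] {S : Set R} {v w x : R}

lemma conj_mem_of_mem_normalizer (hw : w ∈ normalizer S) (hx : x ∈ S) : w * x * star w ∈ S :=
  hw.2.subset (Set.mem_image_of_mem _ hx)

lemma star_mem_normalizer (hw : w ∈ normalizer S) : star w ∈ normalizer S := by
  refine ⟨Unitary.star_mem hw.1, ?_⟩
  have conj_conj : ∀ x, star w * (w * x * star w) * star (star w) = x := fun x => by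
    rw [star_star, mul_assoc w, ← mul_assoc (star w), Unitary.star_mul_self_of_mem hw.1, one_mul,
      mul_assoc, Unitary.star_mul_self_of_mem hw.1, mul_one]
  conv_lhs => rw [← hw.2]
  simp only [Set.image_image, conj_conj, Set.image_id']

lemma mul_mem_normalizer (hv : v ∈ normalizer S) (hw : w ∈ normalizer S) :
    v * w ∈ normalizer S := by
  refine ⟨mul_mem hv.1 hw.1, ?_⟩
  conv_rhs => rw [← hv.2, ← hw.2]
  simp only [Set.image_image, star_mul, mul_assoc]

lemma conj_mem_cent (hw : w ∈ normalizer S) (hx : x ∈ cent S) : w * x * star w ∈ cent S := by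
  intro b hb
  have comm : x * (star w * b * w) = star w * b * w * x := by
    simpa only [star_star] using hx _ (conj_mem_of_mem_normalizer (star_mem_normalizer hw) hb)
  calc w * x * star w * b
      = w * (x * (star w * b * w)) * star w := by
        simp only [mul_assoc, Unitary.mul_star_self_of_mem hw.1, mul_one]
    _ = w * star w * b * (w * x * star w) := by rw [comm]; simp only [mul_assoc]
    _ = b * (w * x * star w) := by rw [Unitary.mul_star_self_of_mem hw.1, one_mul]

end Normalizer

section UBC

variable {R : Type*} [NormedRing R] [StarRing R]

lemma conj_mem_UBC {S : Set R} {w x : R} (hw : w ∈ normalizer S) (hx : x ∈ UBC S) :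
    w * x * star w ∈ UBC S := by
  obtain ⟨b, c, hb, hbu, hc, hcu, rfl⟩ := hx
  have conj_mem_unitary {y : R} (hy : y ∈ unitary R) : w * y * star w ∈ unitary R :=
    mul_mem (mul_mem hw.1 hy) (Unitary.star_mem hw.1)
  refine ⟨w * b * star w, w * c * star w, conj_mem_of_mem_normalizer hw hb, conj_mem_unitary hbu,
    conj_mem_cent hw hc, conj_mem_unitary hcu, ?_⟩
  calc w * (b * c) * star w
      = w * b * (star w * w) * c * star w := by
        rw [Unitary.star_mul_self_of_mem hw.1, mul_one, ← mul_assoc w]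
    _ = w * b * star w * (w * c * star w) := by simp only [mul_assoc]

variable {σ : Type*} [SetLike σ R] [StarMemClass σ R] {B : σ}

lemma star_mem_UBC {x : R} (hx : x ∈ UBC (B : Set R)) : star x ∈ UBC (B : Set R) := by
  obtain ⟨b, c, hb, hbu, hc, hcu, rfl⟩ := hx
  refine ⟨star b, star c, star_mem hb, Unitary.star_mem hbu, star_mem_cent hc,
    Unitary.star_mem hcu, ?_⟩
  rw [star_mul, star_mem_cent hc _ (star_mem hb)]

lemma mul_star_mem_UBC_of_star_mul_mem {u v : R} (hv : v ∈ normalizer (B : Set R))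
    (h : star v * u ∈ UBC (B : Set R)) : v * star u ∈ UBC (B : Set R) := by
  have conj_eq : v * star (star v * u) * star v = v * star u := by
    rw [star_mul, star_star, mul_assoc, mul_assoc, Unitary.mul_star_self_of_mem hv.1, mul_one]
  exact conj_eq ▸ conj_mem_UBC hv (star_mem_UBC h)

end UBC

section Intertwiner

variable {R : Type*} [NormedRing R] [StarRing R]

/-- `a` intertwines the identity with `Ad(w)` on `S`, where `Ad(w)` is `x ↦ w * x * star w`.
When `w` normalizes an algebra `B`, freeness of `Ad(w)|_B` says that `0` is the only such
`a ∈ B`. -/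
def IsIntertwiner (S : Set R) (w a : R) : Prop :=
  ∀ x ∈ S, a * x = w * x * star w * a

namespace IsIntertwiner

lemma smul {𝕜 : Type*} [SMul 𝕜 R] [IsScalarTower 𝕜 R R] [SMulCommClass 𝕜 R R]
    {S : Set R} {w a : R} (h : IsIntertwiner S w a) (c : 𝕜) : IsIntertwiner S w (c • a) :=
  fun x hx => by rw [smul_mul_assoc, h x hx, mul_smul_comm]

lemma star_mul_mem_cent {S : Set R} {w a : R} (h : IsIntertwiner S w a) (hw : w ∈ unitary R) :
    star w * a ∈ cent S := fun x hx =>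
  calc star w * a * x
      = star w * w * x * (star w * a) := by simp only [mul_assoc, h x hx]
    _ = x * (star w * a) := by rw [Unitary.star_mul_self_of_mem hw, one_mul]

variable {σ : Type*} [SetLike σ R] [StarMemClass σ R] {B : σ} {w a : R}

lemma star_mul_self_mem_cent (h : IsIntertwiner (B : Set R) w a) (hw : w ∈ unitary R) :
    star a * a ∈ cent (B : Set R) := by
  have hk := h.star_mul_mem_cent hw
  have star_mul_eq : star (star w * a) * (star w * a) = star a * a := by
    rw [star_mul, star_star, mul_assoc, ← mul_assoc w, Unitary.mul_star_self_of_mem hw, one_mul]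
  exact star_mul_eq ▸ mul_mem_cent (star_mem_cent hk) hk

lemma mul_star_self_mem_cent (h : IsIntertwiner (B : Set R) w a)
    (hw : w ∈ normalizer (B : Set R)) : a * star a ∈ cent (B : Set R) := by
  have hk := h.star_mul_mem_cent hw.1
  have conj_eq : w * (star w * a * star (star w * a)) * star w = a * star a :=
    calc w * (star w * a * star (star w * a)) * star w
        = w * star w * (a * star a) * (w * star w) := by
          simp only [star_mul, star_star, mul_assoc]
      _ = a * star a := by rw [Unitary.mul_star_self_of_mem hw.1, one_mul, mul_one]
  exact conj_eq ▸ conj_mem_cent hw (mul_mem_cent hk (star_mem_cent hk))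

lemma mem_UBC (h : IsIntertwiner (B : Set R) w a) (hw : w ∈ unitary R) (haB : a ∈ B)
    (ha : a ∈ unitary R) : w ∈ UBC (B : Set R) := by
  have hc : star a * w ∈ cent (B : Set R) := by
    simpa only [star_mul, star_star] using star_mem_cent (h.star_mul_mem_cent hw)
  refine ⟨a, star a * w, haB, ha, hc, mul_mem (Unitary.star_mem ha) hw, ?_⟩
  rw [← mul_assoc, Unitary.mul_star_self_of_mem ha, one_mul]

end IsIntertwiner

end Intertwiner

section ScalarSquares

open scoped ComplexOrder in
lemma nonneg_of_star_mul_self_eq_smul_one [Nontrivial A] {a : A} {c : ℂ}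
    (h : star a * a = c • (1 : A)) : 0 ≤ c := by
  let : CStarAlgebra A := {}
  let := CStarAlgebra.spectralOrder A
  have := CStarAlgebra.spectralOrderedRing A
  have hc : c ∈ spectrum ℂ (star a * a) := by
    rw [h, ← Algebra.algebraMap_eq_smul_one, spectrum.scalar_eq]
    exact Set.mem_singleton c
  exact spectrum_nonneg_of_nonneg (star_mul_self_nonneg a) hc

lemma star_mul_self_eq_norm_sq_smul_one {a : A} {c : ℂ} (h : star a * a = c • (1 : A)) :
    star a * a = (‖a‖ : ℂ) ^ 2 • (1 : A) := by
  nontriviality A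
  have norm_c : ‖c‖ = ‖a‖ ^ 2 := by
    rw [sq, ← CStarRing.norm_star_mul_self, h, norm_smul, CStarRing.norm_one, mul_one]
  rw [h, Complex.eq_coe_norm_of_nonneg (nonneg_of_star_mul_self_eq_smul_one h), norm_c,
    Complex.ofReal_pow]

lemma inv_norm_smul_mem_unitary {a : A} (ha : a ≠ 0) (hl : ∃ c : ℂ, star a * a = c • (1 : A))
    (hr : ∃ c : ℂ, a * star a = c • (1 : A)) : (‖a‖ : ℂ)⁻¹ • a ∈ unitary A := by
  obtain ⟨c, hc⟩ := hl
  obtain ⟨d, hd⟩ := hr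
  have hl' : star a * a = (‖a‖ : ℂ) ^ 2 • (1 : A) := star_mul_self_eq_norm_sq_smul_one hc
  have hr' : a * star a = (‖a‖ : ℂ) ^ 2 • (1 : A) := by
    simpa only [star_star, norm_star] using
      star_mul_self_eq_norm_sq_smul_one (a := star a) (by rwa [star_star])
  have star_inv : star (‖a‖ : ℂ)⁻¹ = (‖a‖ : ℂ)⁻¹ := by
    rw [star_inv₀, Complex.star_def, Complex.conj_ofReal]
  have cancel : (‖a‖ : ℂ)⁻¹ * (‖a‖ : ℂ)⁻¹ * (‖a‖ : ℂ) ^ 2 = 1 := by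
    have : (‖a‖ : ℂ) ≠ 0 := Complex.ofReal_ne_zero.mpr (norm_ne_zero_iff.mpr ha)
    field_simp
  rw [Unitary.mem_iff, star_smul, star_inv, smul_mul_smul_comm, smul_mul_smul_comm, hl', hr',
    smul_smul, cancel, one_smul]
  exact ⟨rfl, rfl⟩

end ScalarSquares

section Bimodular

variable {R : Type*} [NormedRing R]

/-- `E` takes values in `S` and respects the left and right multiplications by elements of `S`:
the part of being a conditional expectation onto `S` that controls `E` on the normalizer. -/
structure IsBimodular (S : Set R) (E : R → R) : Prop where
  map_mem : ∀ x, E x ∈ S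
  map_mul_mul : ∀ b₁ ∈ S, ∀ b₂ ∈ S, ∀ x, E (b₁ * x * b₂) = b₁ * E x * b₂

lemma IsCondExp.isBimodular [StarRing R] [NormedAlgebra ℂ R] {S : Set R} {E : R →ₗ[ℂ] R}
    (hE : IsCondExp S E) : IsBimodular S E :=
  ⟨hE.1, hE.2.2.2⟩

lemma IsBimodular.isIntertwiner [StarRing R] {S : Set R} {E : R → R} (hE : IsBimodular S E)
    (h1 : 1 ∈ S) {w : R} (hw : w ∈ normalizer S) : IsIntertwiner S w (E w) := fun x hx =>
  calc E w * x
      = E (w * x) := by simpa only [one_mul] using (hE.map_mul_mul 1 h1 x hx w).symm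
    _ = E (w * x * star w * w) := by
      rw [mul_assoc _ (star w), Unitary.star_mul_self_of_mem hw.1, mul_one]
    _ = w * x * star w * E w := by
      simpa only [mul_one] using
        hE.map_mul_mul _ (conj_mem_of_mem_normalizer hw hx) 1 h1 w

end Bimodular

section ScalarCenter

/-- The center of `S`, taken as `S ∩ cent S`, consists of scalars: for a unital subalgebra this is
`Z(S) = ℂ·1`. -/
def HasScalarCenter (S : Set A) : Prop :=
  ∀ z ∈ S, z ∈ cent S → ∃ c : ℂ, z = c • (1 : A)

variable {B : StarSubalgebra ℂ A} {w : A}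

lemma IsIntertwiner.eq_zero {a : A} (h : IsIntertwiner (B : Set A) w a)
    (hZ : HasScalarCenter (B : Set A)) (hw : w ∈ normalizer (B : Set A))
    (hw' : w ∉ UBC (B : Set A)) (ha : a ∈ B) : a = 0 := by
  by_contra ha0
  have hu : (‖a‖ : ℂ)⁻¹ • a ∈ unitary A := inv_norm_smul_mem_unitary ha0
    (hZ _ (mul_mem (star_mem ha) ha) (h.star_mul_self_mem_cent hw.1))
    (hZ _ (mul_mem ha (star_mem ha)) (h.mul_star_self_mem_cent hw))
  exact hw' ((h.smul _).mem_UBC hw.1 (B.smul_mem ha _) hu)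

lemma IsBimodular.apply_eq_zero {E : A → A} (hE : IsBimodular (B : Set A) E)
    (hZ : HasScalarCenter (B : Set A)) (hw : w ∈ normalizer (B : Set A))
    (hw' : w ∉ UBC (B : Set A)) : E w = 0 :=
  (hE.isIntertwiner (one_mem B) hw).eq_zero hZ hw hw' (hE.map_mem w)

theorem normalizer_outside_UBC_free_and_expectation_zero_general
    (hZ : HasScalarCenter (B : Set A)) (hw : w ∈ normalizer (B : Set A))
    (hw' : w ∉ UBC (B : Set A)) :
    (∀ a ∈ B, IsIntertwiner (B : Set A) w a → a = 0) ∧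
    (∀ E : A → A, IsBimodular (B : Set A) E → E w = 0) ∧
    (∀ E : A → A, IsBimodular (B : Set A) E →
      ∀ u ∈ normalizer (B : Set A), ∀ v ∈ normalizer (B : Set A),
        v * star u ∉ UBC (B : Set A) → E (v * star u) = 0 ∧ E (star v * u) = 0) :=
  ⟨fun _ ha h => h.eq_zero hZ hw hw' ha,
    fun _ hE => hE.apply_eq_zero hZ hw hw',
    fun _ hE _ hu _ hv huv =>
      ⟨hE.apply_eq_zero hZ (mul_mem_normalizer hv (star_mem_normalizer hu)) huv,
        hE.apply_eq_zero hZ (mul_mem_normalizer (star_mem_normalizer hv) hu)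
          (mt (mul_star_mem_UBC_of_star_mul_mem hv) huv)⟩⟩

end ScalarCenter

/-- if `B ⊆ A` has `Z(B) = ℂ·1` and `w ∈ N_A(B) \ U(B)·U(C_A(B))`, then
`Ad(w)|_B` is free, `E(w) = 0` for every conditional expectation `E : A → B`, and
consequently `E(v u*) = 0 = E(v* u)` whenever `u, v ∈ N_A(B)` with
`v u* ∉ U(B)·U(C_A(B))`. -/
theorem normalizer_outside_UBC_free_and_expectation_zero
    (B : StarSubalgebra ℂ A) (hBclosed : IsClosed (B : Set A))
    (hZB : ∀ z ∈ (B : Set A), (∀ x ∈ (B : Set A), z * x = x * z) → ∃ c : ℂ, z = c • (1 : A))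
    (w : A) (hw : w ∈ normalizer (B : Set A)) (hw' : w ∉ UBC (B : Set A)) :
    (∀ a ∈ (B : Set A), (∀ x ∈ (B : Set A), a * x = (w * x * star w) * a) → a = 0) ∧
    (∀ E : A →ₗ[ℂ] A, IsCondExp (B : Set A) E → E w = 0) ∧
    (∀ E : A →ₗ[ℂ] A, IsCondExp (B : Set A) E →
      ∀ u ∈ normalizer (B : Set A), ∀ v ∈ normalizer (B : Set A),
        v * star u ∉ UBC (B : Set A) → E (v * star u) = 0 ∧ E (star v * u) = 0) :=
  have ⟨free, zero, zero_mul_star⟩ :=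
    normalizer_outside_UBC_free_and_expectation_zero_general hZB hw hw'
  ⟨free, fun E hE => zero E hE.isBimodular, fun E hE => zero_mul_star E hE.isBimodular⟩

end RegularInclusion
end
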